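/- arXiv:1312.2603 — 2 statements merged into one kernel-verified Lean document; each statement's English description precedes it below -/
import Mathlib

section
/- Let d ≥ 1, let D be a real symmetric positive definite d×d matrix, let N ≥ 0, and for each t > 0 let p_t : ℤᵈ → [0,∞) satisfy ∑_{x} p_t(x) = N and ∑_{x} e^{λ‖x‖₁} p_t(x) < ∞ for every λ ≥ 0, so that M_t(z) = ∑_{x ∈ ℤᵈ} exp( i ∑_j z_j x_j ) p_t(x) defines an entire function of z ∈ ℂᵈ. Assume that for every compact K ⊂ ℂᵈ, sup_{z ∈ K} | M_t(z/√t) − N·exp( −(1/2) ∑_{i,j} D_{ij} z_i z_j ) | → 0 as t → ∞. Then for every continuous function f : ℝᵈ → ℝ that is polynomially bounded (i.e. |f(x)| ≤ C(1 + ‖x‖)^k for some C, k), one has lim_{t→∞} ∑_{x ∈ ℤᵈ} f(x/√t) p_t(x) = N · (2π)^{−d/2} (det D)^{−1/2} ∫_{ℝᵈ} f(x) exp( −(1/2) ⟨x, D⁻¹ x⟩ ) dx. -/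
open MeasureTheory Filter

/-- The ℓ¹ norm `‖x‖₁ = ∑ i, |x i|` of `x ∈ ℤᵈ`. -/
def normOne {d : ℕ} (x : Fin d → ℤ) : ℝ := ∑ i, |(x i : ℝ)|

open scoped MatrixOrder in
open ProbabilityTheory in
lemma pi_gauss_density (d : ℕ) :
    Measure.pi (fun _ : Fin d => gaussianReal 0 1) =
      (volume : Measure (Fin d → ℝ)).withDensity
        (fun x => ENNReal.ofReal (∏ i, gaussianPDFReal 0 1 (x i))) := by
  apply Measure.pi_eq
  intro s hs
  rw [withDensity_apply _ (MeasurableSet.univ_pi hs), volume_pi, Measure.restrict_pi_pi,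
    ← ofReal_integral_eq_lintegral_ofReal]
  · rw [integral_fintype_prod_eq_prod (f := fun _ y => gaussianPDFReal 0 1 y),
      ENNReal.ofReal_prod_of_nonneg]
    · refine Finset.prod_congr rfl fun i _ => ?_
      rw [gaussianReal_of_var_ne_zero _ one_ne_zero, withDensity_apply _ (hs i),
        ofReal_integral_eq_lintegral_ofReal (integrable_gaussianPDFReal 0 1).integrableOn
          (.of_forall fun x => gaussianPDFReal_nonneg _ _ _)]
      rfl
    · exact fun i _ => integral_nonneg fun x => gaussianPDFReal_nonneg _ _ _
  · exact Integrable.fintype_prod (f := fun _ y => gaussianPDFReal 0 1 y)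
      fun i => (integrable_gaussianPDFReal 0 1).integrableOn
  · exact .of_forall fun x => Finset.prod_nonneg fun i _ => gaussianPDFReal_nonneg _ _ _

open scoped MatrixOrder in
lemma exists_sqrt {d : ℕ} (D : Matrix (Fin d) (Fin d) ℝ) (hD : D.PosDef) :
    (CFC.sqrt D).transpose = CFC.sqrt D ∧ CFC.sqrt D * CFC.sqrt D = D ∧ (CFC.sqrt D).det = √ D.det := by
  have h1 : CFC.sqrt D * CFC.sqrt D = D := CFC.sqrt_mul_sqrt_self _ hD.posSemidef.nonneg
  have h0 : (CFC.sqrt D).PosSemidef := (Matrix.nonneg_iff_posSemidef).1 (CFC.sqrt_nonneg D)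
  refine ⟨?_, h1, ?_⟩
  · have := h0.1
    rwa [Matrix.IsHermitian, Matrix.conjTranspose_eq_transpose_of_trivial] at this
  · have h2 := congrArg Matrix.det h1
    rw [Matrix.det_mul] at h2
    rw [← h2, Real.sqrt_mul_self h0.det_nonneg]

open scoped MatrixOrder in
open ProbabilityTheory in
lemma integral_gauss {d : ℕ} (D : Matrix (Fin d) (Fin d) ℝ) (hD : D.PosDef)
    (f : (Fin d → ℝ) → ℝ) (hf : Continuous f) :
    ∫ x, f (WithLp.ofLp x) ∂(multivariateGaussian 0 D) =
      (2 * Real.pi) ^ (-(d : ℝ) / 2) * (Real.sqrt D.det)⁻¹ *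
        ∫ x : Fin d → ℝ,
          f x * Real.exp (-(1 / 2) * ∑ i, x i * Matrix.mulVec D⁻¹ x i) := by
  obtain ⟨hS, hSS, hdet⟩ := exists_sqrt D hD
  set S := CFC.sqrt D with hSdef
  have hDdet : 0 < D.det := hD.det_pos
  have hdet0 : 0 < S.det := by rw [hdet]; positivity
  have hunit : IsUnit S.det := hdet0.ne'.isUnit
  have step1 : ∫ x, f (WithLp.ofLp x) ∂(multivariateGaussian 0 D) =
      ∫ y, f (S.mulVec y) ∂(Measure.pi (fun _ : Fin d => gaussianReal 0 1)) := by
    rw [multivariateGaussian, integral_map (by fun_prop) (by fun_prop), ← map_pi_eq_stdGaussian,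
      integral_map (by fun_prop) (by fun_prop)]
    simp [hSdef]
  have hprod : ∀ y : Fin d → ℝ, ∏ i, gaussianPDFReal 0 1 (y i) =
      (2 * Real.pi) ^ (-(d : ℝ) / 2) * Real.exp (-(1/2) * ∑ i, y i ^ 2) := by
    intro y
    simp only [gaussianPDFReal, Finset.prod_mul_distrib, ← Real.exp_sum]
    congr 1
    · rw [Finset.prod_const, Finset.card_univ, Fintype.card_fin, NNReal.coe_one, mul_one,
        Real.sqrt_eq_rpow, ← Real.rpow_neg (by positivity), ← Real.rpow_natCast,
        ← Real.rpow_mul (by positivity)]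
      congr 1; ring
    · rw [Finset.mul_sum]
      congr 1; refine Finset.sum_congr rfl fun i _ => ?_
      simp; ring
  have hmap := Real.map_matrix_volume_pi_eq_smul_volume_pi hdet0.ne'
  have hquad : ∀ y : Fin d → ℝ, ∑ i, (S.mulVec y) i * Matrix.mulVec D⁻¹ (S.mulVec y) i = ∑ i, y i ^ 2 := by
    intro y
    change S.mulVec y ⬝ᵥ D⁻¹.mulVec (S.mulVec y) = _
    have : S * (D⁻¹ * S) = 1 := by
      rw [← hSS, Matrix.mul_inv_rev, Matrix.mul_assoc, Matrix.nonsing_inv_mul _ hunit, Matrix.mul_one, Matrix.mul_nonsing_inv _ hunit]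
    rw [Matrix.mulVec_mulVec, dotProduct_comm, Matrix.dotProduct_mulVec, ← Matrix.mulVec_transpose, hS, Matrix.mulVec_mulVec, this]
    simp [dotProduct, sq]
  rw [step1, pi_gauss_density, integral_withDensity_eq_integral_toReal_smul (by fun_prop) (by simp)]
  have hvol : (volume : Measure (Fin d → ℝ)) = ENNReal.ofReal S.det • Measure.map (Matrix.toLin' S) volume := by
    rw [hmap, smul_smul, ← ENNReal.ofReal_mul hdet0.le, abs_of_pos (by positivity), mul_inv_cancel₀ hdet0.ne']
    simp
  have hmeas : Measurable (Matrix.toLin' S) := (LinearMap.continuous_of_finiteDimensional _).measurable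
  conv_rhs => rw [hvol]
  rw [integral_smul_measure, integral_map hmeas.aemeasurable (by fun_prop), ENNReal.toReal_ofReal hdet0.le]
  simp only [Matrix.toLin'_apply, hquad, hprod]
  have hpos : ∀ y : Fin d → ℝ, 0 ≤ (2 * Real.pi) ^ (-(d : ℝ) / 2) * Real.exp (-(1/2) * ∑ i, y i ^ 2) := fun y => by positivity
  simp only [ENNReal.toReal_ofReal (hpos _), smul_eq_mul]
  rw [mul_assoc, ← mul_assoc _ S.det, hdet, inv_mul_cancel₀ (by positivity), one_mul, ← integral_const_mul]
  congr 1; ext y; ring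

lemma trunc_bound (R y : ℝ) (hR : 0 < R) : |y - max (-R) (min R y)| ≤ y ^ 2 / R := by
  rw [le_div_iff₀ hR]
  rcases le_total R y with h | h
  · rw [min_eq_left h, max_eq_right (by linarith), abs_of_nonneg (by linarith)]
    nlinarith
  · rw [min_eq_right h]
    rcases le_total (-R) y with h' | h'
    · rw [max_eq_right h']; simp; positivity
    · rw [max_eq_left h', abs_of_nonpos (by linarith)]
      nlinarith

lemma trunc_int {E : Type*} [TopologicalSpace E] [MeasurableSpace E] [BorelSpace E]
    (ν : Measure E) [IsProbabilityMeasure ν] (f : E → ℝ) (hf : Continuous f)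
    (h2 : Integrable (fun x => f x ^ 2) ν) (R : ℝ) (hR : 0 < R) :
    |∫ x, f x ∂ν - ∫ x, max (-R) (min R (f x)) ∂ν| ≤ (∫ x, f x ^ 2 ∂ν) / R := by
  have hfi : Integrable f ν :=
    ((memLp_two_iff_integrable_sq hf.aestronglyMeasurable).2 h2).integrable (by norm_num)
  have hti : Integrable (fun x => max (-R) (min R (f x))) ν := by
    refine Integrable.mono' (integrable_const R) (by fun_prop) (.of_forall fun x => ?_)
    rw [Real.norm_eq_abs, abs_le]
    exact ⟨le_max_left _ _, max_le (by linarith) (min_le_left _ _)⟩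
  rw [← integral_sub hfi hti, ← integral_div]
  refine (abs_integral_le_integral_abs).trans ?_
  exact integral_mono (hfi.sub hti).abs (h2.div_const R) fun x => trunc_bound R (f x) hR

lemma tendsto_integral_of_sq_bdd {E : Type*} [TopologicalSpace E] [MeasurableSpace E] [BorelSpace E]
    (μ : ℕ → ProbabilityMeasure E) (μ₀ : ProbabilityMeasure E) (h : Tendsto μ atTop (nhds μ₀))
    (f : E → ℝ) (hf : Continuous f) (B : ℝ)
    (h2 : ∀ n, Integrable (fun x => f x ^ 2) (μ n : Measure E))
    (h20 : Integrable (fun x => f x ^ 2) (μ₀ : Measure E))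
    (hB : ∀ᶠ n in atTop, ∫ x, f x ^ 2 ∂(μ n : Measure E) ≤ B) :
    Tendsto (fun n => ∫ x, f x ∂(μ n : Measure E)) atTop (nhds (∫ x, f x ∂(μ₀ : Measure E))) := by
  rw [ProbabilityMeasure.tendsto_iff_forall_integral_tendsto] at h
  rw [Metric.tendsto_nhds]
  intro ε hε
  set B0 := ∫ x, f x ^ 2 ∂(μ₀ : Measure E)
  have hB0 : 0 ≤ B0 := integral_nonneg fun x => sq_nonneg _
  set R := 3 * (|B| + B0 + 1) / ε with hR
  have hRpos : 0 < R := by positivity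
  let g : BoundedContinuousFunction E ℝ :=
    BoundedContinuousFunction.ofNormedAddCommGroup (fun x => max (-R) (min R (f x))) (by fun_prop) R
      (fun x => by
        rw [Real.norm_eq_abs, abs_le]
        exact ⟨le_max_left _ _, max_le (by linarith) (min_le_left _ _)⟩)
  have hg := h g
  rw [Metric.tendsto_nhds] at hg
  filter_upwards [hB, hg (ε / 3) (by positivity)] with n hn hgn
  have e1 := trunc_int (μ n : Measure E) f hf (h2 n) R hRpos
  have e2 := trunc_int (μ₀ : Measure E) f hf h20 R hRpos
  have e3 : (∫ x, f x ^ 2 ∂(μ n : Measure E)) / R < ε / 3 := by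
    rw [div_lt_iff₀ hRpos, hR]
    have : ε / 3 * (3 * (|B| + B0 + 1) / ε) = |B| + B0 + 1 := by field_simp
    rw [this]; linarith [le_abs_self B]
  have e4 : B0 / R < ε / 3 := by
    rw [div_lt_iff₀ hRpos, hR]
    have : ε / 3 * (3 * (|B| + B0 + 1) / ε) = |B| + B0 + 1 := by field_simp
    rw [this]; linarith [abs_nonneg B]
  rw [Real.dist_eq] at hgn ⊢
  simp only [g, BoundedContinuousFunction.coe_ofNormedAddCommGroup] at hgn
  have k1 := abs_lt.1 (e1.trans_lt e3)
  have k2 := abs_lt.1 (e2.trans_lt e4)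
  have k3 := abs_lt.1 hgn
  rw [abs_lt]
  constructor <;> linarith [k1.1, k1.2, k2.1, k2.2, k3.1, k3.2]

lemma poly_gauss {d : ℕ} (ν : Measure (EuclideanSpace ℝ (Fin d))) [ProbabilityTheory.IsGaussian ν]
    (f : (Fin d → ℝ) → ℝ) (hf : Continuous f) (C : ℝ) (k : ℕ)
    (hfk : ∀ x : Fin d → ℝ, |f x| ≤ C * (1 + ‖x‖) ^ k) :
    Integrable (fun x : EuclideanSpace ℝ (Fin d) => f (WithLp.ofLp x) ^ 2) ν := by
  have h1 : Integrable (fun x : EuclideanSpace ℝ (Fin d) => (1 + ‖x‖) ^ (2 * k)) ν := by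
    have hm : MemLp (fun x : EuclideanSpace ℝ (Fin d) => 1 + ‖x‖) ((2 * k : ℕ)) ν :=
      (memLp_const (1:ℝ)).add
        (ProbabilityTheory.IsGaussian.memLp_id ν ((2 * k : ℕ)) (ENNReal.natCast_ne_top _)).norm
    have := hm.integrable_norm_pow' 
    refine this.congr (.of_forall fun x => ?_)
    simp only [Real.norm_eq_abs]
    rw [abs_of_nonneg (by positivity)]
  refine Integrable.mono' (h1.const_mul (C ^ 2)) (by fun_prop) (.of_forall fun x => ?_)
  have hx : ‖WithLp.ofLp x‖ ≤ ‖x‖ := by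
    refine (pi_norm_le_iff_of_nonneg (norm_nonneg _)).2 fun i => PiLp.norm_apply_le x i
  have hC : 0 ≤ C := by
    have := (abs_nonneg _).trans (hfk 0); simpa using this
  have : |f (WithLp.ofLp x)| ≤ C * (1 + ‖x‖) ^ k := (hfk _).trans (by gcongr)
  rw [Real.norm_eq_abs, abs_of_nonneg (sq_nonneg _), ← sq_abs]
  calc _ ≤ (C * (1 + ‖x‖) ^ k) ^ 2 := by gcongr
    _ = _ := by ring

lemma exp_sup_le {d : ℕ} (x : Fin d → ℝ) :
    Real.exp ‖x‖ ≤ 1 + ∑ j, (Real.exp (x j) + Real.exp (- x j)) := by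
  have hn : ∀ j, 0 ≤ Real.exp (x j) + Real.exp (- x j) := fun j => by positivity
  rcases Nat.eq_zero_or_pos d with h | h
  · subst h; simp [Subsingleton.elim x 0]
  · have : Nonempty (Fin d) := ⟨⟨0, h⟩⟩
    obtain ⟨j, hj⟩ := Finite.exists_max (fun j => ‖x j‖)
    have : ‖x‖ ≤ ‖x j‖ := (pi_norm_le_iff_of_nonneg (norm_nonneg _)).2 hj
    have h2 : Real.exp ‖x‖ ≤ Real.exp (x j) + Real.exp (- x j) := by
      refine (Real.exp_le_exp.2 this).trans ?_
      rw [Real.norm_eq_abs]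
      exact Real.exp_abs_le _
    have := Finset.single_le_sum (fun i _ => hn i) (Finset.mem_univ j)
    linarith

lemma poly_le_exp (k : ℕ) : ∃ C : ℝ, 0 ≤ C ∧ ∀ r : ℝ, 0 ≤ r → (1 + r) ^ k ≤ C * Real.exp r := by
  refine ⟨k.factorial * Real.exp 1, by positivity, fun r hr => ?_⟩
  have := Real.pow_div_factorial_le_exp (1 + r) (by linarith) k
  rw [div_le_iff₀ (by positivity), Real.exp_add] at this
  linarith

/-- A weighted sum of Dirac masses. -/
noncomputable def diracSum {d : ℕ} (w : (Fin d → ℤ) → ℝ) (s : ℝ) :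
    Measure (EuclideanSpace ℝ (Fin d)) :=
  Measure.sum (fun x : Fin d → ℤ => ENNReal.ofReal (w x) •
    Measure.dirac (WithLp.toLp 2 (fun i => (x i : ℝ) / Real.sqrt s)))

lemma diracSum_prob {d : ℕ} (w : (Fin d → ℤ) → ℝ) (s : ℝ) (h0 : ∀ x, 0 ≤ w x)
    (h1 : HasSum w 1) : IsProbabilityMeasure (diracSum w s) := by
  constructor
  simp only [diracSum, Measure.sum_apply _ MeasurableSet.univ, Measure.smul_apply, measure_univ,
    smul_eq_mul, mul_one]
  rw [← ENNReal.ofReal_tsum_of_nonneg h0 h1.summable, h1.tsum_eq, ENNReal.ofReal_one]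

lemma diracSum_integral {d : ℕ} (w : (Fin d → ℤ) → ℝ) (s : ℝ) (h0 : ∀ x, 0 ≤ w x)
    (g : EuclideanSpace ℝ (Fin d) → ℝ) :
    ∫ y, g y ∂(diracSum w s) =
      ∑' x : Fin d → ℤ, w x * g (WithLp.toLp 2 (fun i => (x i : ℝ) / Real.sqrt s)) := by
  rw [diracSum, integral_sum_dirac (by simp)]
  simp only [ENNReal.toReal_ofReal (h0 _), smul_eq_mul]

lemma diracSum_charFun {d : ℕ} (w : (Fin d → ℤ) → ℝ) (s : ℝ) (h0 : ∀ x, 0 ≤ w x)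
    (ξ : EuclideanSpace ℝ (Fin d)) :
    charFun (diracSum w s) ξ =
      ∑' x : Fin d → ℤ, Complex.exp (Complex.I * ∑ j, ((ξ j : ℂ) / (Real.sqrt s : ℂ)) * (x j : ℂ)) *
        (w x : ℂ) := by
  rw [charFun_apply, diracSum, integral_sum_dirac (by simp)]
  refine tsum_congr fun x => ?_
  rw [ENNReal.toReal_ofReal (h0 _), Complex.real_smul, mul_comm]
  congr 2
  rw [PiLp.inner_apply, mul_comm]
  push_cast
  congr 1
  refine Finset.sum_congr rfl fun j _ => ?_
  simp
  ring

lemma exp_moment_summable {d : ℕ} (w : (Fin d → ℤ) → ℝ) (s : ℝ) (h0 : ∀ x, 0 ≤ w x)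
    (hexp : ∀ lam : ℝ, 0 ≤ lam →
      Summable (fun x : Fin d → ℤ => Real.exp (lam * normOne x) * w x)) (j : Fin d) (σ : ℝ) :
    Summable (fun x : Fin d → ℤ => Real.exp (σ * ((x j : ℝ) / Real.sqrt s)) * w x) := by
  refine Summable.of_nonneg_of_le (fun x => mul_nonneg (Real.exp_pos _).le (h0 x)) (fun x => ?_)
    (hexp (|σ| / Real.sqrt s) (by positivity))
  refine mul_le_mul_of_nonneg_right (Real.exp_le_exp.2 ?_) (h0 x)
  have h1 : |(x j : ℝ)| ≤ normOne x :=
    Finset.single_le_sum (f := fun i => |(x i : ℝ)|) (fun i _ => abs_nonneg _) (Finset.mem_univ j)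
  calc σ * ((x j : ℝ) / Real.sqrt s) ≤ |σ * ((x j : ℝ) / Real.sqrt s)| := le_abs_self _
    _ = |σ| / Real.sqrt s * |(x j : ℝ)| := by
      rw [abs_mul, abs_div, abs_of_nonneg (Real.sqrt_nonneg s)]; ring
    _ ≤ _ := by gcongr

lemma exp_moment_eq {d : ℕ} (w : (Fin d → ℤ) → ℝ) (s : ℝ) (j : Fin d) (σ : ℝ) :
    ((∑' x : Fin d → ℤ, Real.exp (σ * ((x j : ℝ) / Real.sqrt s)) * w x : ℝ) : ℂ) =
      ∑' x : Fin d → ℤ, Complex.exp (Complex.I * ∑ i,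
        ((Pi.single j (-σ * Complex.I) : Fin d → ℂ) i / (Real.sqrt s : ℂ)) * (x i : ℂ)) *
        (w x : ℂ) := by
  rw [Complex.ofReal_tsum]
  refine tsum_congr fun x => ?_
  push_cast
  congr 2
  rw [Finset.sum_eq_single j]
  · simp only [Pi.single_eq_same]
    linear_combination ((σ : ℂ) * ((x j : ℂ) / (Real.sqrt s : ℂ))) * Complex.I_mul_I
  · intro i _ hi
    simp [Pi.single_eq_of_ne hi]
  · simp

lemma main_seq {d : ℕ}
    (D : Matrix (Fin d) (Fin d) ℝ) (hDpos : D.PosDef)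
    (N : ℝ) (hN : 0 < N)
    (p : ℝ → (Fin d → ℤ) → ℝ)
    (hp0 : ∀ t : ℝ, 0 < t → ∀ x, 0 ≤ p t x)
    (hpN : ∀ t : ℝ, 0 < t → HasSum (p t) N)
    (hpexp : ∀ t : ℝ, 0 < t → ∀ lam : ℝ, 0 ≤ lam →
      Summable (fun x : Fin d → ℤ => Real.exp (lam * normOne x) * p t x))
    (s : ℕ → ℝ) (hs : ∀ n, 0 < s n)
    (hconv : ∀ z : Fin d → ℂ, Tendsto (fun n => ∑' x : Fin d → ℤ,
        Complex.exp (Complex.I * ∑ j, (z j / (Real.sqrt (s n) : ℂ)) * (x j : ℂ)) * (p (s n) x : ℂ))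
      atTop (nhds ((N : ℂ) * Complex.exp (-(1 / 2) * ∑ i, ∑ j, (D i j : ℂ) * z i * z j))))
    (f : (Fin d → ℝ) → ℝ) (hf : Continuous f)
    (C : ℝ) (k : ℕ) (hfk : ∀ x : Fin d → ℝ, |f x| ≤ C * (1 + ‖x‖) ^ k) :
    Tendsto
      (fun n => ∑' x : Fin d → ℤ, f (fun i => (x i : ℝ) / Real.sqrt (s n)) * p (s n) x)
      atTop
      (nhds (N * (2 * Real.pi) ^ (-(d : ℝ) / 2) * (Real.sqrt D.det)⁻¹ *
        ∫ x : Fin d → ℝ,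
          f x * Real.exp (-(1 / 2) * ∑ i, x i * Matrix.mulVec D⁻¹ x i))) := by
  let w : ℕ → (Fin d → ℤ) → ℝ := fun n x => p (s n) x / N
  have hw0 : ∀ n x, 0 ≤ w n x := fun n x => div_nonneg (hp0 _ (hs n) x) hN.le
  have hw1 : ∀ n, HasSum (w n) 1 := fun n => by
    have := (hpN _ (hs n)).div_const N
    rwa [div_self hN.ne'] at this
  have hwexp : ∀ n, ∀ lam : ℝ, 0 ≤ lam →
      Summable (fun x : Fin d → ℤ => Real.exp (lam * normOne x) * w n x) := fun n lam hl => by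
    refine ((hpexp _ (hs n) lam hl).div_const N).congr fun x => ?_
    simp only [w]; ring
  have hwconv : ∀ z : Fin d → ℂ, Tendsto (fun n => ∑' x : Fin d → ℤ,
        Complex.exp (Complex.I * ∑ j, (z j / (Real.sqrt (s n) : ℂ)) * (x j : ℂ)) * (w n x : ℂ))
      atTop (nhds (Complex.exp (-(1 / 2) * ∑ i, ∑ j, (D i j : ℂ) * z i * z j))) := fun z => by
    have hNc : (N : ℂ) ≠ 0 := by exact_mod_cast hN.ne'
    have := (hconv z).div_const (N : ℂ)
    rw [mul_div_cancel_left₀ _ hNc] at this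
    refine this.congr fun n => ?_
    rw [← tsum_div_const]
    refine tsum_congr fun x => ?_
    simp only [w]; push_cast; ring
  have hprob := fun n => diracSum_prob (w n) (s n) (hw0 n) (hw1 n)
  let μ : ℕ → ProbabilityMeasure (EuclideanSpace ℝ (Fin d)) :=
    fun n => ⟨diracSum (w n) (s n), hprob n⟩
  let μ₀ : ProbabilityMeasure (EuclideanSpace ℝ (Fin d)) :=
    ⟨ProbabilityTheory.multivariateGaussian 0 D, inferInstance⟩
  have hweak : Tendsto μ atTop (nhds μ₀) := by
    apply ProbabilityMeasure.tendsto_of_tendsto_charFun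
    intro ξ
    have h := hwconv (fun j => (ξ j : ℂ))
    have e : charFun (μ₀ : Measure (EuclideanSpace ℝ (Fin d))) ξ =
        Complex.exp (-(1 / 2) * ∑ i, ∑ j, (D i j : ℂ) * (ξ i : ℂ) * (ξ j : ℂ)) := by
      change charFun (ProbabilityTheory.multivariateGaussian 0 D) ξ = _
      rw [ProbabilityTheory.charFun_multivariateGaussian hDpos.posSemidef]
      congr 1
      simp only [inner_zero_right, dotProduct, Matrix.mulVec, Finset.mul_sum]
      push_cast
      simp only [zero_mul, zero_sub, Finset.sum_div, ← Finset.sum_neg_distrib, Finset.mul_sum]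
      refine Finset.sum_congr rfl fun i _ => Finset.sum_congr rfl fun j _ => ?_
      ring
    rw [e]
    refine h.congr fun n => ?_
    exact (diracSum_charFun (w n) (s n) (hw0 n) ξ).symm
  -- exponential moments
  let G : ℕ → (Fin d → ℤ) → ℝ := fun n x => w n x + ∑ j,
    (Real.exp (1 * ((x j : ℝ) / Real.sqrt (s n))) * w n x +
      Real.exp (-1 * ((x j : ℝ) / Real.sqrt (s n))) * w n x)
  have hsm := fun n j σ => exp_moment_summable (w n) (s n) (hw0 n) (hwexp n) j σ
  have hGs : ∀ n, HasSum (G n) (1 + ∑ j,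
      (∑' x : Fin d → ℤ, Real.exp (1 * ((x j : ℝ) / Real.sqrt (s n))) * w n x +
      ∑' x : Fin d → ℤ, Real.exp (-1 * ((x j : ℝ) / Real.sqrt (s n))) * w n x)) := fun n =>
    (hw1 n).add (hasSum_sum fun j _ => (hsm n j 1).hasSum.add (hsm n j (-1)).hasSum)
  have hlim : ∀ j σ, ∃ L : ℝ, Tendsto
      (fun n => ∑' x : Fin d → ℤ, Real.exp (σ * ((x j : ℝ) / Real.sqrt (s n))) * w n x)
      atTop (nhds L) := fun j σ => by
    have h := hwconv (Pi.single j (-σ * Complex.I))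
    refine ⟨_, ((Complex.continuous_re.tendsto _).comp h).congr fun n => ?_⟩
    simp only [Function.comp]
    rw [← exp_moment_eq, Complex.ofReal_re]
  choose L hL using hlim
  have hGlim : Tendsto (fun n => ∑' x, G n x) atTop (nhds (1 + ∑ j, (L j 1 + L j (-1)))) := by
    refine Tendsto.congr (fun n => (hGs n).tsum_eq.symm) ?_
    exact tendsto_const_nhds.add (tendsto_finsetSum _ fun j _ => (hL j 1).add (hL j (-1)))
  obtain ⟨C', hC', hpoly⟩ := poly_le_exp (2 * k)
  have hsq : ∀ n x, w n x * f (fun i => (x i : ℝ) / Real.sqrt (s n)) ^ 2 ≤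
      C ^ 2 * C' * G n x := fun n x => by
    set y : Fin d → ℝ := fun i => (x i : ℝ) / Real.sqrt (s n) with hy
    have h1 : f y ^ 2 ≤ C ^ 2 * C' * (1 + ∑ j, (Real.exp (y j) + Real.exp (- y j))) := by
      rw [← sq_abs]
      calc |f y| ^ 2 ≤ (C * (1 + ‖y‖) ^ k) ^ 2 := by gcongr; exact hfk y
        _ = C ^ 2 * (1 + ‖y‖) ^ (2 * k) := by ring
        _ ≤ C ^ 2 * (C' * Real.exp ‖y‖) := by gcongr; exact hpoly _ (norm_nonneg _)
        _ ≤ C ^ 2 * (C' * (1 + ∑ j, (Real.exp (y j) + Real.exp (- y j)))) := by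
          gcongr; exact exp_sup_le y
        _ = _ := by ring
    have h2 : G n x = w n x * (1 + ∑ j, (Real.exp (y j) + Real.exp (- y j))) := by
      simp only [G, hy, one_mul, neg_mul, mul_comm (w n x), add_mul, Finset.sum_mul]
    rw [h2]
    calc _ ≤ w n x * (C ^ 2 * C' * (1 + ∑ j, (Real.exp (y j) + Real.exp (- y j)))) :=
          mul_le_mul_of_nonneg_left h1 (hw0 n x)
      _ = _ := by ring
  have hsqs : ∀ n, Summable (fun x : Fin d → ℤ =>
      w n x * f (fun i => (x i : ℝ) / Real.sqrt (s n)) ^ 2) := fun n =>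
    Summable.of_nonneg_of_le (fun x => mul_nonneg (hw0 n x) (sq_nonneg _)) (hsq n)
      ((hGs n).summable.mul_left _)
  have key := tendsto_integral_of_sq_bdd μ μ₀ hweak (fun x => f (WithLp.ofLp x)) (by fun_prop)
    (C ^ 2 * C' * (1 + ∑ j, (L j 1 + L j (-1)) + 1)) ?_ ?_ ?_
  · change Tendsto (fun n => ∫ x, f (WithLp.ofLp x) ∂(diracSum (w n) (s n))) atTop
      (nhds (∫ x, f (WithLp.ofLp x) ∂(ProbabilityTheory.multivariateGaussian 0 D))) at key
    rw [integral_gauss D hDpos f hf] at key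
    have key2 := key.const_mul N
    simp only [← mul_assoc] at key2
    refine key2.congr fun n => ?_
    rw [diracSum_integral _ _ (hw0 n), ← tsum_mul_left]
    refine tsum_congr fun x => ?_
    simp only [w]
    field_simp
  · intro n
    change Integrable _ (diracSum (w n) (s n))
    refine integrable_sum_dirac (by simp) ((hsqs n).congr fun x => ?_)
    rw [ENNReal.toReal_ofReal (hw0 n x), Real.norm_eq_abs, abs_of_nonneg (sq_nonneg _)]
  · exact poly_gauss (ProbabilityTheory.multivariateGaussian 0 D) f hf C k hfk
  · filter_upwards [hGlim.eventually (gt_mem_nhds (lt_add_one _))] with n hn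
    change ∫ x, f (WithLp.ofLp x) ^ 2 ∂(diracSum (w n) (s n)) ≤ _
    rw [diracSum_integral _ _ (hw0 n) (fun x => f (WithLp.ofLp x) ^ 2)]
    calc _ ≤ ∑' x, C ^ 2 * C' * G n x :=
          (hsqs n).tsum_le_tsum (hsq n) ((hGs n).summable.mul_left _)
      _ = C ^ 2 * C' * ∑' x, G n x := tsum_mul_left
      _ ≤ _ := by gcongr

/-- Central limit theorem for position averages: if the diffusively rescaled
characteristic functions `M_t(z/√t)` converge to `N e^{−½ z·Dz}` uniformly on compact subsets of
`ℂᵈ`, then for every polynomially bounded continuous `f`,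
`∑_x f(x/√t) p_t(x) → N (2π)^{−d/2} (det D)^{−1/2} ∫ f(x) e^{−½⟨x,D⁻¹x⟩} dx`. -/
theorem stmt_12 {d : ℕ} (hd : 1 ≤ d)
    (D : Matrix (Fin d) (Fin d) ℝ) (hDsymm : D.IsSymm) (hDpos : D.PosDef)
    (N : ℝ) (hN : 0 ≤ N)
    (p : ℝ → (Fin d → ℤ) → ℝ)
    (hp0 : ∀ t : ℝ, 0 < t → ∀ x, 0 ≤ p t x)
    (hpN : ∀ t : ℝ, 0 < t → HasSum (p t) N)
    (hpexp : ∀ t : ℝ, 0 < t → ∀ lam : ℝ, 0 ≤ lam →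
      Summable (fun x : Fin d → ℤ => Real.exp (lam * normOne x) * p t x))
    (M : ℝ → (Fin d → ℂ) → ℂ)
    (hM : ∀ (t : ℝ) (z : Fin d → ℂ),
      M t z = ∑' x : Fin d → ℤ,
        Complex.exp (Complex.I * ∑ j, z j * (x j : ℂ)) * (p t x : ℂ))
    (hconv : ∀ K : Set (Fin d → ℂ), IsCompact K →
      TendstoUniformlyOn
        (fun (t : ℝ) (z : Fin d → ℂ) => M t (fun i => z i / (Real.sqrt t : ℂ)))
        (fun z : Fin d → ℂ =>
          (N : ℂ) * Complex.exp (-(1 / 2) * ∑ i, ∑ j, (D i j : ℂ) * z i * z j))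
        atTop K)
    (f : (Fin d → ℝ) → ℝ) (hf : Continuous f)
    (hfpoly : ∃ (C : ℝ) (k : ℕ), ∀ x : Fin d → ℝ, |f x| ≤ C * (1 + ‖x‖) ^ k) :
    Tendsto
      (fun t : ℝ => ∑' x : Fin d → ℤ, f (fun i => (x i : ℝ) / Real.sqrt t) * p t x)
      atTop
      (nhds (N * (2 * Real.pi) ^ (-(d : ℝ) / 2) * (Real.sqrt D.det)⁻¹ *
        ∫ x : Fin d → ℝ,
          f x * Real.exp (-(1 / 2) * ∑ i, x i * Matrix.mulVec D⁻¹ x i))) := by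
  obtain ⟨C, k, hfk⟩ := hfpoly
  rcases hN.eq_or_lt with h0 | hNpos
  · have hz : ∀ t : ℝ, 0 < t → ∀ x, p t x = 0 := fun t ht x => by
      have h := hpN t ht
      rw [← h0] at h
      exact congrFun ((hasSum_zero_iff_of_nonneg (hp0 t ht)).1 h) x
    rw [← h0]
    simp only [zero_mul]
    refine tendsto_const_nhds.congr' ?_
    filter_upwards [eventually_gt_atTop 0] with t ht
    simp [hz t ht]
  · refine tendsto_of_seq_tendsto fun u hu => ?_
    have hmax : Tendsto (fun n => max (u n) 1) atTop atTop :=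
      tendsto_atTop_mono (fun n => le_max_left _ _) hu
    have key := main_seq D hDpos N hNpos p hp0 hpN hpexp (fun n => max (u n) 1)
      (fun n => lt_of_lt_of_le one_pos (le_max_right _ _)) (fun z => by
        have h := ((hconv {z} isCompact_singleton).tendsto_at (Set.mem_singleton z)).comp hmax
        refine h.congr fun n => ?_
        simp only [Function.comp, hM]) f hf C k hfk
    refine key.congr' ?_
    filter_upwards [hu.eventually_ge_atTop 1] with n hn
    simp only [Function.comp, max_eq_left hn]
end

section
/- Let d ≥ 1, let D be a real symmetric positive definite d×d matrix, let N ≥ 0, and for each t > 0 let p_t : ℤᵈ → [0,∞) satisfy ∑_{x} p_t(x) = N and ∑_{x} e^{λ‖x‖₁} p_t(x) < ∞ for every λ ≥ 0, so that M_t(z) = ∑_{x ∈ ℤᵈ} exp( i ∑_j z_j x_j ) p_t(x) defines an entire function of z ∈ ℂᵈ. Assume that for every compact K ⊂ ℂᵈ, sup_{z ∈ K} | M_t(z/√t) − N·exp( −(1/2) ∑_{i,j} D_{ij} z_i z_j ) | → 0 as t → ∞. Then for every positive integer n, lim_{t→∞} t^{−n} ∑_{x ∈ ℤᵈ} ‖x‖₂^{2n}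 p_t(x) = N · (2π)^{−d/2} (det D)^{−1/2} ∫_{ℝᵈ} ‖x‖₂^{2n} exp( −(1/2) ⟨x, D⁻¹ x⟩ ) dx. -/
open MeasureTheory Filter

open ProbabilityTheory

lemma aux_pi_gauss (d : ℕ) : Measure.pi (fun _ : Fin d => gaussianReal 0 1) =
    (volume : Measure (Fin d → ℝ)).withDensity
      (fun y => ENNReal.ofReal (∏ i, gaussianPDFReal 0 1 (y i))) := by
  refine (Measure.pi_eq ?_)
  intro s hs
  rw [withDensity_apply _ (MeasurableSet.univ_pi hs), volume_pi, Measure.restrict_pi_pi]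
  rw [← ofReal_integral_eq_lintegral_ofReal]
  · rw [integral_fintype_prod_eq_prod (fun _ x => gaussianPDFReal 0 1 x),
      ENNReal.ofReal_prod_of_nonneg]
    · refine Finset.prod_congr rfl fun i _ => ?_
      rw [gaussianReal_apply_eq_integral _ one_ne_zero]
    · intro i _
      exact integral_nonneg fun x => gaussianPDFReal_nonneg _ _ _
  · exact Integrable.fintype_prod (f := fun _ x => gaussianPDFReal 0 1 x)
      fun i => (integrable_gaussianPDFReal 0 1).restrict
  · exact Eventually.of_forall fun x => Finset.prod_nonneg fun i _ => gaussianPDFReal_nonneg _ _ _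

open scoped MatrixOrder Matrix.Norms.L2Operator in
lemma aux_gauss_integral {d : ℕ} (D : Matrix (Fin d) (Fin d) ℝ) (hD : D.PosDef)
    (f : EuclideanSpace ℝ (Fin d) → ℝ) (hf : Continuous f) :
    ∫ x, f x ∂(multivariateGaussian 0 D) =
      (2 * Real.pi) ^ (-(d : ℝ) / 2) * (Real.sqrt D.det)⁻¹ *
        ∫ x : Fin d → ℝ, f (WithLp.toLp 2 x) *
            Real.exp (-(1 / 2) * ∑ i, x i * Matrix.mulVec D⁻¹ x i) := by
  classical
  set A := CFC.sqrt D with hA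
  have hAA : A * A = D := CFC.sqrt_mul_sqrt_self _ hD.posSemidef.nonneg
  have hAs : A.transpose = A := by
    have := (CFC.sqrt_nonneg D).isSelfAdjoint
    exact this
  have hdet : A.det * A.det = D.det := by rw [← Matrix.det_mul, hAA]
  have hDd : 0 < D.det := hD.det_pos
  have hAd : A.det ≠ 0 := by
    intro h; rw [h] at hdet; simp at hdet; linarith
  have hsq : Real.sqrt D.det = |A.det| := by
    rw [← hdet, ← sq, Real.sqrt_sq_eq_abs]
  have hquad : ∀ y : Fin d → ℝ,
      ∑ i, (A.mulVec y) i * (D⁻¹.mulVec (A.mulVec y)) i = ∑ i, y i ^ 2 := by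
    intro y
    have h1 : A.transpose * (D⁻¹ * A) = 1 := by
      have hu : IsUnit A.det := isUnit_iff_ne_zero.2 hAd
      rw [hAs, ← hAA, Matrix.mul_inv_rev, Matrix.mul_assoc, Matrix.nonsing_inv_mul _ hu, mul_one,
        Matrix.mul_nonsing_inv _ hu]
    calc _ = (A.mulVec y) ⬝ᵥ (D⁻¹.mulVec (A.mulVec y)) := rfl
      _ = y ⬝ᵥ ((A.transpose * (D⁻¹ * A)).mulVec y) := by
        rw [← Matrix.mulVec_mulVec, ← Matrix.mulVec_mulVec, Matrix.dotProduct_mulVec y,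
          Matrix.vecMul_transpose]
      _ = _ := by rw [h1, Matrix.one_mulVec]; simp [dotProduct, sq]
  have hdens : ∀ y : Fin d → ℝ, ∏ i, gaussianPDFReal 0 1 (y i) =
      (2 * Real.pi) ^ (-(d : ℝ) / 2) * Real.exp (-(1 / 2) * ∑ i, y i ^ 2) := by
    intro y
    simp only [gaussianPDFReal, NNReal.coe_one, mul_one, sub_zero]
    rw [Finset.prod_mul_distrib, ← Real.exp_sum]
    congr 1
    · rw [Finset.prod_const, Finset.card_univ, Fintype.card_fin, Real.sqrt_eq_rpow,
        ← Real.rpow_neg (by positivity), ← Real.rpow_natCast, ← Real.rpow_mul (by positivity)]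
      congr 1; ring
    · rw [Finset.mul_sum]; congr 1; refine Finset.sum_congr rfl fun i _ => by ring
  rw [multivariateGaussian, ← map_pi_eq_stdGaussian]
  rw [integral_map (by fun_prop) (by fun_prop), integral_map (by fun_prop)
    (by apply Continuous.aestronglyMeasurable; fun_prop)]
  rw [aux_pi_gauss, integral_withDensity_eq_integral_toReal_smul]
  rotate_left
  · simp_rw [hdens]; fun_prop
  · simp
  simp_rw [ENNReal.toReal_ofReal (Finset.prod_nonneg fun i _ => gaussianPDFReal_nonneg _ _ _), hdens]
  have hmap := Real.map_matrix_volume_pi_eq_smul_volume_pi hAd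
  have hcv : ∀ F : (Fin d → ℝ) → ℝ, Continuous F →
      ∫ y, F (A.mulVec y) = |A.det|⁻¹ * ∫ x, F x := by
    intro F hF
    have : ∫ x, F x ∂(Measure.map (Matrix.toLin' A) volume) = ∫ y, F (A.mulVec y) := by
      rw [integral_map]
      · rfl
      · exact (LinearMap.continuous_of_finiteDimensional _).aemeasurable
      · exact hF.aestronglyMeasurable
    rw [← this, hmap, integral_smul_measure, ENNReal.toReal_ofReal (abs_nonneg _), abs_inv,
      smul_eq_mul]
  rw [hsq, mul_assoc, ← hcv, ← integral_const_mul]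
  · congr 1; ext y
    rw [hquad]
    simp only [zero_add, smul_eq_mul]
    have : (Matrix.toEuclideanCLM (𝕜 := ℝ) A) (WithLp.toLp 2 y) = WithLp.toLp 2 (A.mulVec y) := by
      simp
    rw [this]; ring
  · have : ∀ i, Continuous fun x : Fin d → ℝ => (D⁻¹.mulVec x) i := by
      intro i; simp only [Matrix.mulVec, dotProduct]; fun_prop
    fun_prop

lemma aux_key {E : Type*} [TopologicalSpace E] [MeasurableSpace E] [OpensMeasurableSpace E]
    {μ : ℕ → ProbabilityMeasure E} {μ0 : ProbabilityMeasure E}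
    (h : Tendsto μ atTop (nhds μ0)) (f : E → ℝ) (hf : Continuous f) (hf0 : ∀ x, 0 ≤ f x)
    (C : ℝ) (hi : ∀ᶠ n in atTop, Integrable (fun x => f x ^ 2) (μ n : Measure E) ∧
      ∫ x, f x ^ 2 ∂(μ n : Measure E) ≤ C)
    (hi0 : Integrable (fun x => f x ^ 2) (μ0 : Measure E)) :
    Tendsto (fun n => ∫ x, f x ∂(μ n : Measure E)) atTop (nhds (∫ x, f x ∂(μ0 : Measure E))) := by
  have hb : ∀ R : ℝ, 0 < R → ∀ ν : ProbabilityMeasure E,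
      Integrable (fun x => f x ^ 2) (ν : Measure E) →
      |∫ x, f x ∂(ν : Measure E) - ∫ x, min (f x) R ∂(ν : Measure E)|
        ≤ (∫ x, f x ^ 2 ∂(ν : Measure E)) / R := by
    intro R hR ν hν
    have h1 : Integrable f (ν : Measure E) := by
      refine ((integrable_const (1:ℝ)).add hν).mono' hf.aestronglyMeasurable ?_
      refine Eventually.of_forall fun x => ?_
      simp only [Real.norm_eq_abs, Pi.add_apply, abs_of_nonneg (hf0 x)]
      nlinarith [sq_nonneg (f x - 1), hf0 x]
    have h2 : Integrable (fun x => min (f x) R) (ν : Measure E) := h1.inf (integrable_const R)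
    rw [← integral_sub h1 h2, ← integral_div, abs_of_nonneg]
    · refine integral_mono (h1.sub h2) (hν.div_const R) fun x => ?_
      show f x - min (f x) R ≤ f x ^ 2 / R
      rw [le_div_iff₀ hR]
      rcases le_total (f x) R with h | h
      · rw [min_eq_left h]; nlinarith [sq_nonneg (f x)]
      · rw [min_eq_right h]; nlinarith [sq_nonneg (f x - R), hf0 x]
    · exact integral_nonneg fun x => sub_nonneg.2 (min_le_left _ _)
  rw [Metric.tendsto_atTop']
  intro ε hε
  set C' := max C (∫ x, f x ^ 2 ∂(μ0 : Measure E)) 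
  have hC0 : 0 ≤ C' := le_max_of_le_right (integral_nonneg fun x => sq_nonneg _)
  set R := (C' + 1) * 3 / ε with hR
  have hRp : 0 < R := by positivity
  have hCR : C' / R < ε / 3 := by
    rw [div_lt_iff₀ hRp, hR]; field_simp; linarith
  let g : BoundedContinuousFunction E ℝ := BoundedContinuousFunction.ofNormedAddCommGroup
    (fun x => min (f x) R) (by fun_prop) R (fun x => by
      rw [Real.norm_eq_abs, abs_of_nonneg (le_min (hf0 x) hRp.le)]; exact min_le_right _ _)
  have hg := (ProbabilityMeasure.tendsto_iff_forall_integral_tendsto.1 h) g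
  have hg2 := (Metric.tendsto_nhds.1 hg) (ε/3) (by positivity)
  obtain ⟨n0, hn0⟩ := eventually_atTop.1 (hg2.and hi)
  refine ⟨n0, fun n hn => ?_⟩
  obtain ⟨a1, a2, a3⟩ := hn0 n hn.le
  rw [Real.dist_eq] at *
  have e1 := hb R hRp (μ n) a2
  have e2 := hb R hRp μ0 hi0
  have e3 : (∫ x, f x ^ 2 ∂(μ n : Measure E)) / R ≤ C' / R := by
    gcongr; exact a3.trans (le_max_left _ _)
  have e4 : (∫ x, f x ^ 2 ∂(μ0 : Measure E)) / R ≤ C' / R := by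
    gcongr; exact le_max_right _ _
  change |∫ x, min (f x) R ∂(μ n : Measure E) - ∫ x, min (f x) R ∂(μ0 : Measure E)| < _ at a1
  rw [abs_lt] at *
  rw [abs_le] at e1 e2
  constructor <;> linarith [a1.1, a1.2, e1.1, e1.2, e2.1, e2.2]

lemma aux_bound {d : ℕ} (hd : 1 ≤ d) (k : ℕ) (y : EuclideanSpace ℝ (Fin d)) :
    ‖y‖ ^ k ≤ (k.factorial : ℝ) *
      ∑ j, (Real.exp ((d : ℝ) * y j) + Real.exp (-(d : ℝ) * y j)) := by
  have h1 : ‖y‖ ^ k ≤ (k.factorial : ℝ) * Real.exp ‖y‖ := by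
    have := Real.pow_div_factorial_le_exp ‖y‖ (norm_nonneg y) k
    rwa [div_le_iff₀' (by positivity)] at this
  refine h1.trans ?_
  gcongr
  have h2 : ‖y‖ ≤ ∑ i, |y i| := by
    rw [EuclideanSpace.norm_eq]
    refine Real.sqrt_le_iff.2 ⟨Finset.sum_nonneg fun i _ => abs_nonneg _, ?_⟩
    simp only [Real.norm_eq_abs]
    exact Finset.sum_sq_le_sq_sum_of_nonneg fun i _ => abs_nonneg _
  haveI : Nonempty (Fin d) := ⟨⟨0, hd⟩⟩
  obtain ⟨j, -, hj⟩ := Finset.exists_max_image Finset.univ (fun i => |y i|) Finset.univ_nonempty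
  have h3 : ∑ i, |y i| ≤ d * |y j| := by
    have := Finset.sum_le_card_nsmul Finset.univ (fun i => |y i|) (|y j|) hj
    simpa using this
  have h4 : Real.exp ‖y‖ ≤ Real.exp ((d : ℝ) * y j) + Real.exp (-(d : ℝ) * y j) := by
    have : Real.exp ‖y‖ ≤ Real.exp (d * |y j|) := Real.exp_le_exp.2 (h2.trans h3)
    refine this.trans ?_
    rcases abs_cases (y j) with ⟨h, _⟩ | ⟨h, _⟩ <;> rw [h]
    · linarith [Real.exp_pos (-(d : ℝ) * y j)]
    · rw [mul_neg, ← neg_mul]; linarith [Real.exp_pos ((d : ℝ) * y j)]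
  refine h4.trans ?_
  exact Finset.single_le_sum (f := fun j => Real.exp ((d : ℝ) * y j) + Real.exp (-(d : ℝ) * y j))
    (fun i _ => by positivity) (Finset.mem_univ j)

/-- The rescaled lattice point. -/
noncomputable def auxX {d : ℕ} (t : ℝ) (x : Fin d → ℤ) : EuclideanSpace ℝ (Fin d) :=
  WithLp.toLp 2 (fun i => (x i : ℝ) / Real.sqrt t)

/-- The rescaled normalized measure. -/
noncomputable def auxMu {d : ℕ} (N : ℝ) (p : ℝ → (Fin d → ℤ) → ℝ) (t : ℝ) :
    Measure (EuclideanSpace ℝ (Fin d)) :=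
  Measure.sum (fun x => ENNReal.ofReal (p t x / N) • Measure.dirac (auxX t x))

lemma auxMu_prob {d : ℕ} (N : ℝ) (hN : 0 < N) (p : ℝ → (Fin d → ℤ) → ℝ) (t : ℝ)
    (h0 : ∀ x, 0 ≤ p t x) (hs : HasSum (p t) N) : IsProbabilityMeasure (auxMu N p t) := by
  constructor
  have h := hs.div_const N
  rw [div_self hN.ne'] at h
  simp only [auxMu, Measure.sum_apply _ MeasurableSet.univ, Measure.smul_apply, measure_univ,
    smul_eq_mul, mul_one]
  rw [← ENNReal.ofReal_tsum_of_nonneg (fun x => div_nonneg (h0 x) hN.le) h.summable, h.tsum_eq,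
    ENNReal.ofReal_one]

lemma auxMu_integral {d : ℕ} {F : Type*} [NormedAddCommGroup F] [NormedSpace ℝ F]
    [FiniteDimensional ℝ F] (N : ℝ) (hN : 0 < N) (p : ℝ → (Fin d → ℤ) → ℝ) (t : ℝ)
    (h0 : ∀ x, 0 ≤ p t x) (f : EuclideanSpace ℝ (Fin d) → F) :
    ∫ x, f x ∂(auxMu N p t) = ∑' x, (p t x / N) • f (auxX t x) := by
  rw [auxMu, integral_sum_dirac (by simp)]
  congr with x
  rw [ENNReal.toReal_ofReal (div_nonneg (h0 x) hN.le)]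

lemma auxMu_integrable {d : ℕ} {F : Type*} [NormedAddCommGroup F] 
    (N : ℝ) (hN : 0 < N) (p : ℝ → (Fin d → ℤ) → ℝ) (t : ℝ)
    (h0 : ∀ x, 0 ≤ p t x) (f : EuclideanSpace ℝ (Fin d) → F)
    (h : Summable fun x => (p t x / N) * ‖f (auxX t x)‖) :
    Integrable f (auxMu N p t) := by
  refine integrable_sum_dirac (by simp) ?_
  convert h with x
  rw [ENNReal.toReal_ofReal (div_nonneg (h0 x) hN.le)]

lemma auxX_norm {d : ℕ} (t : ℝ) (x : Fin d → ℤ) :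
    ‖auxX t x‖ = Real.sqrt (∑ i, (x i : ℝ) ^ 2) / Real.sqrt t := by
  rw [EuclideanSpace.norm_eq]
  simp only [auxX, Real.norm_eq_abs, sq_abs, div_pow, ← Finset.sum_div]
  rw [Real.sqrt_div' _ (sq_nonneg _), Real.sqrt_sq (Real.sqrt_nonneg t)]

lemma aux_exp_summable {d : ℕ} (p : (Fin d → ℤ) → ℝ) (t : ℝ) 
    (hp0 : ∀ x, 0 ≤ p x)
    (hpexp : ∀ lam : ℝ, 0 ≤ lam →
      Summable (fun x : Fin d → ℤ => Real.exp (lam * normOne x) * p x)) (s : ℝ) (j : Fin d) :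
    Summable (fun x : Fin d → ℤ => Real.exp (s * auxX t x j) * p x) := by
  refine Summable.of_nonneg_of_le (fun x => mul_nonneg (Real.exp_pos _).le (hp0 x)) (fun x => ?_)
    (hpexp (|s| / Real.sqrt t) (by positivity))
  refine mul_le_mul_of_nonneg_right (Real.exp_le_exp.2 ?_) (hp0 x)
  calc s * auxX t x j ≤ |s * auxX t x j| := le_abs_self _
    _ = |s| / Real.sqrt t * |(x j : ℝ)| := by
      simp only [auxX, abs_mul, abs_div, abs_of_nonneg (Real.sqrt_nonneg t)]; ring
    _ ≤ _ := by
      gcongr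
      exact Finset.single_le_sum (f := fun j => |(x j : ℝ)|) (fun i _ => abs_nonneg _)
        (Finset.mem_univ j)

lemma aux_exp_tendsto {d : ℕ} 
    (D : Matrix (Fin d) (Fin d) ℝ) (N : ℝ)
    (p : ℝ → (Fin d → ℤ) → ℝ)
    (M : ℝ → (Fin d → ℂ) → ℂ)
    (hM : ∀ (t : ℝ) (z : Fin d → ℂ),
      M t z = ∑' x : Fin d → ℤ,
        Complex.exp (Complex.I * ∑ j, z j * (x j : ℂ)) * (p t x : ℂ))
    (hpt : ∀ z : Fin d → ℂ, 
      Tendsto (fun t : ℝ => M t (fun i => z i / (Real.sqrt t : ℂ))) atTop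
        (nhds ((N : ℂ) * Complex.exp (-(1 / 2) * ∑ i, ∑ j, (D i j : ℂ) * z i * z j))))
    (s : ℝ) (j : Fin d) :
    ∃ L, Tendsto (fun t => ∑' x : Fin d → ℤ, Real.exp (s * auxX t x j) * p t x) atTop (nhds L) := by
  have h := hpt (Pi.single j (-Complex.I * s))
  refine ⟨_, ((Complex.continuous_re.tendsto _).comp h).congr fun t => ?_⟩
  simp only [Function.comp]
  rw [hM, ← Complex.ofReal_re (∑' x : Fin d → ℤ, _), Complex.ofReal_tsum]
  congr 2
  ext x
  rw [Finset.sum_eq_single j]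
  · push_cast
    congr 2
    simp only [Pi.single_eq_same, auxX]
    push_cast
    linear_combination (-(s * (x j : ℂ) / (Real.sqrt t : ℂ))) * Complex.I_mul_I
  · intro b _ hb; simp [Pi.single_eq_of_ne hb]
  · simp

lemma aux_seq {d : ℕ} (hd : 1 ≤ d)
    (D : Matrix (Fin d) (Fin d) ℝ) (hDpos : D.PosDef)
    (N : ℝ) (hN : 0 < N)
    (p : ℝ → (Fin d → ℤ) → ℝ)
    (hp0 : ∀ t : ℝ, 0 < t → ∀ x, 0 ≤ p t x)
    (hpN : ∀ t : ℝ, 0 < t → HasSum (p t) N)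
    (hpexp : ∀ t : ℝ, 0 < t → ∀ lam : ℝ, 0 ≤ lam →
      Summable (fun x : Fin d → ℤ => Real.exp (lam * normOne x) * p t x))
    (M : ℝ → (Fin d → ℂ) → ℂ)
    (hM : ∀ (t : ℝ) (z : Fin d → ℂ),
      M t z = ∑' x : Fin d → ℤ,
        Complex.exp (Complex.I * ∑ j, z j * (x j : ℂ)) * (p t x : ℂ))
    (hpt : ∀ z : Fin d → ℂ, 
      Tendsto (fun t : ℝ => M t (fun i => z i / (Real.sqrt t : ℂ))) atTop
        (nhds ((N : ℂ) * Complex.exp (-(1 / 2) * ∑ i, ∑ j, (D i j : ℂ) * z i * z j))))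
    (n : ℕ) (v : ℕ → ℝ) (hv0 : ∀ k, 0 < v k) (hv : Tendsto v atTop atTop) :
    Tendsto (fun k => ∑' x, p (v k) x / N * ‖auxX (v k) x‖ ^ (2 * n)) atTop
      (nhds (∫ x, ‖x‖ ^ (2 * n) ∂(multivariateGaussian 0 D))) := by
  have hpr := fun k => auxMu_prob N hN p (v k) (hp0 _ (hv0 k)) (hpN _ (hv0 k))
  let μ : ℕ → ProbabilityMeasure (EuclideanSpace ℝ (Fin d)) := fun k => ⟨auxMu N p (v k), hpr k⟩
  let μ0 : ProbabilityMeasure (EuclideanSpace ℝ (Fin d)) :=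
    ⟨multivariateGaussian 0 D, inferInstance⟩
  have hconv : Tendsto μ atTop (nhds μ0) := by
    refine ProbabilityMeasure.tendsto_of_tendsto_charFun fun θ => ?_
    have hc := charFun_multivariateGaussian (μ := 0) hDpos.posSemidef θ
    change Tendsto (fun k => charFun (auxMu N p (v k)) θ) atTop
      (nhds (charFun (multivariateGaussian 0 D) θ))
    rw [hc]
    have h1 := ((hpt (fun i => (θ i : ℂ))).comp hv).div_const (N : ℂ)
    have hNc : (N : ℂ) ≠ 0 := by exact_mod_cast hN.ne'
    rw [mul_div_cancel_left₀ _ hNc] at h1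
    convert h1 using 2 with k
    · rw [charFun_apply, auxMu_integral N hN p _ (hp0 _ (hv0 k))]
      simp only [Function.comp]
      rw [hM, ← tsum_div_const]
      congr 1
      ext x
      rw [Complex.real_smul]
      have : Complex.I * ∑ j, (θ j : ℂ) / (Real.sqrt (v k) : ℂ) * (x j : ℂ)
          = (inner ℝ (auxX (v k) x) θ : ℝ) * Complex.I := by
        simp only [PiLp.inner_apply, auxX]
        push_cast
        rw [mul_comm]
        congr 1
        refine Finset.sum_congr rfl fun i _ => ?_
        simp
        ring
      rw [this]; push_cast; ring
    · congr 1
      simp only [inner_zero_right, dotProduct, Matrix.mulVec]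
      push_cast
      rw [zero_mul, zero_sub, neg_mul, ← mul_comm (∑ i, _), mul_one_div]
      congr 2
      refine Finset.sum_congr rfl fun i _ => ?_
      rw [Finset.mul_sum]
      refine Finset.sum_congr rfl fun j _ => ?_
      ring
  have hsumb : ∀ k, Summable (fun x => p (v k) x / N * (((2 * n * 2).factorial : ℝ) *
      ∑ j, (Real.exp ((d : ℝ) * auxX (v k) x j) + Real.exp (-(d : ℝ) * auxX (v k) x j)))) := by
    intro k
    have : Summable (fun x => ((2 * n * 2).factorial : ℝ) / N *
      ∑ j, (Real.exp ((d : ℝ) * auxX (v k) x j) * p (v k) x +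
        Real.exp (-(d : ℝ) * auxX (v k) x j) * p (v k) x)) := by
      refine Summable.mul_left _ (summable_sum fun j _ => ?_)
      exact (aux_exp_summable _ _ (hp0 _ (hv0 k)) (hpexp _ (hv0 k)) _ _).add
        (aux_exp_summable _ _ (hp0 _ (hv0 k)) (hpexp _ (hv0 k)) _ _)
    refine this.congr fun x => ?_
    simp only [← add_mul, ← Finset.sum_mul]
    ring
  have hle : ∀ k x, p (v k) x / N * (‖auxX (v k) x‖ ^ (2 * n)) ^ 2 ≤
      p (v k) x / N * (((2 * n * 2).factorial : ℝ) *
      ∑ j, (Real.exp ((d : ℝ) * auxX (v k) x j) + Real.exp (-(d : ℝ) * auxX (v k) x j))) := by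
    intro k x
    rw [← pow_mul]
    exact mul_le_mul_of_nonneg_left (aux_bound hd _ _) (div_nonneg (hp0 _ (hv0 k) x) hN.le)
  have hsum : ∀ k, Summable (fun x => p (v k) x / N * (‖auxX (v k) x‖ ^ (2 * n)) ^ 2) := fun k =>
    Summable.of_nonneg_of_le
      (fun x => mul_nonneg (div_nonneg (hp0 _ (hv0 k) x) hN.le) (sq_nonneg _)) (hle k) (hsumb k)
  choose Lp hLp using aux_exp_tendsto D N p M hM hpt (d : ℝ)
  choose Lm hLm using aux_exp_tendsto D N p M hM hpt (-(d : ℝ))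
  have hT : Tendsto (fun k => ((2 * n * 2).factorial : ℝ) / N *
      ∑ j, ((∑' x, Real.exp ((d : ℝ) * auxX (v k) x j) * p (v k) x) +
        ∑' x, Real.exp (-(d : ℝ) * auxX (v k) x j) * p (v k) x)) atTop
      (nhds (((2 * n * 2).factorial : ℝ) / N * ∑ j, (Lp j + Lm j))) :=
    (tendsto_finsetSum _ fun j _ => ((hLp j).comp hv).add ((hLm j).comp hv)).const_mul _
  have hev := hT.eventually (gt_mem_nhds (lt_add_one _))
  have hmain := aux_key hconv (fun x => ‖x‖ ^ (2 * n)) (by fun_prop) (fun x => by positivity) _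
    (hi := by
      filter_upwards [hev] with k hk
      refine ⟨auxMu_integrable N hN p _ (hp0 _ (hv0 k)) _ ?_, ?_⟩
      · refine (hsum k).congr fun x => ?_
        rw [Real.norm_of_nonneg (by positivity)]
      · refine le_trans ?_ hk.le
        change ∫ x, (‖x‖ ^ (2 * n)) ^ 2 ∂(auxMu N p (v k)) ≤ _
        rw [auxMu_integral N hN p _ (hp0 _ (hv0 k))]
        simp only [smul_eq_mul]
        refine ((hsum k).tsum_le_tsum (hle k) (hsumb k)).trans (le_of_eq ?_)
        have e1 := fun (s : ℝ) j =>
          aux_exp_summable (p (v k)) (v k) (hp0 _ (hv0 k)) (hpexp _ (hv0 k)) s j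
        simp only [← (e1 _ _).tsum_add (e1 _ _)]
        rw [← Summable.tsum_finsetSum (fun j _ => (e1 _ j).add (e1 _ j)), ← tsum_mul_left]
        congr 1
        ext x
        simp only [← add_mul, ← Finset.sum_mul]
        ring)
    (hi0 := by
      have := (IsGaussian.memLp_id (multivariateGaussian (0 : EuclideanSpace ℝ (Fin d)) D)
        ((2 * n * 2 : ℕ) : ENNReal) (ENNReal.natCast_ne_top _)).integrable_norm_pow'
      change Integrable _ (multivariateGaussian (0 : EuclideanSpace ℝ (Fin d)) D)
      simpa only [← pow_mul, id] using this)
  refine hmain.congr fun k => ?_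
  change ∫ x, ‖x‖ ^ (2 * n) ∂(auxMu N p (v k)) = _
  rw [auxMu_integral N hN p _ (hp0 _ (hv0 k))]
  rfl

/-- Diffusive scaling of all even moments: if the diffusively rescaled
characteristic functions `M_t(z/√t)` converge to `N e^{−½ z·Dz}` uniformly on compact subsets of
`ℂᵈ`, then for every `n ≥ 1`,
`t^{−n} ∑_x ‖x‖₂^{2n} p_t(x) → N (2π)^{−d/2} (det D)^{−1/2} ∫ ‖x‖₂^{2n} e^{−½⟨x,D⁻¹x⟩} dx`. -/
theorem stmt_13 {d : ℕ} (hd : 1 ≤ d)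
    (D : Matrix (Fin d) (Fin d) ℝ) (hDsymm : D.IsSymm) (hDpos : D.PosDef)
    (N : ℝ) (hN : 0 ≤ N)
    (p : ℝ → (Fin d → ℤ) → ℝ)
    (hp0 : ∀ t : ℝ, 0 < t → ∀ x, 0 ≤ p t x)
    (hpN : ∀ t : ℝ, 0 < t → HasSum (p t) N)
    (hpexp : ∀ t : ℝ, 0 < t → ∀ lam : ℝ, 0 ≤ lam →
      Summable (fun x : Fin d → ℤ => Real.exp (lam * normOne x) * p t x))
    (M : ℝ → (Fin d → ℂ) → ℂ)
    (hM : ∀ (t : ℝ) (z : Fin d → ℂ),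
      M t z = ∑' x : Fin d → ℤ,
        Complex.exp (Complex.I * ∑ j, z j * (x j : ℂ)) * (p t x : ℂ))
    (hconv : ∀ K : Set (Fin d → ℂ), IsCompact K →
      TendstoUniformlyOn
        (fun (t : ℝ) (z : Fin d → ℂ) => M t (fun i => z i / (Real.sqrt t : ℂ)))
        (fun z : Fin d → ℂ =>
          (N : ℂ) * Complex.exp (-(1 / 2) * ∑ i, ∑ j, (D i j : ℂ) * z i * z j))
        atTop K)
    (n : ℕ) (hn : 0 < n) :
    Tendsto
      (fun t : ℝ =>
        (∑' x : Fin d → ℤ, Real.sqrt (∑ i, ((x i : ℝ)) ^ 2) ^ (2 * n) * p t x) / t ^ n)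
      atTop
      (nhds (N * (2 * Real.pi) ^ (-(d : ℝ) / 2) * (Real.sqrt D.det)⁻¹ *
        ∫ x : Fin d → ℝ,
          Real.sqrt (∑ i, (x i) ^ 2) ^ (2 * n) *
            Real.exp (-(1 / 2) * ∑ i, x i * Matrix.mulVec D⁻¹ x i))) := by
  rcases hN.eq_or_lt with rfl | hN
  · refine Tendsto.congr' (f₁ := fun _ => (0 : ℝ)) ?_ (by simp)
    filter_upwards [eventually_gt_atTop 0] with t ht
    have : p t = 0 := (hasSum_zero_iff_of_nonneg (hp0 t ht)).1 (hpN t ht)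
    simp [this]
  have hpt : ∀ z : Fin d → ℂ, 
      Tendsto (fun t : ℝ => M t (fun i => z i / (Real.sqrt t : ℂ))) atTop
        (nhds ((N : ℂ) * Complex.exp (-(1 / 2) * ∑ i, ∑ j, (D i j : ℂ) * z i * z j))) :=
    fun z => (hconv {z} isCompact_singleton).tendsto_at rfl
  refine tendsto_of_seq_tendsto fun u hu => ?_
  have hueq : (fun k => max (u k) 1) =ᶠ[atTop] u := by
    filter_upwards [hu.eventually_ge_atTop 1] with k hk
    exact max_eq_left hk
  have hv : Tendsto (fun k => max (u k) 1) atTop atTop := hu.congr' hueq.symm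
  have key := (aux_seq hd D hDpos N hN p hp0 hpN hpexp M hM hpt n _
    (fun k => lt_max_of_lt_right one_pos) hv).const_mul N
  rw [aux_gauss_integral D hDpos _ (by fun_prop)] at key
  have hlim : N * (2 * Real.pi) ^ (-(d : ℝ) / 2) * (Real.sqrt D.det)⁻¹ *
        (∫ x : Fin d → ℝ,
          Real.sqrt (∑ i, (x i) ^ 2) ^ (2 * n) *
            Real.exp (-(1 / 2) * ∑ i, x i * Matrix.mulVec D⁻¹ x i)) =
      N * ((2 * Real.pi) ^ (-(d : ℝ) / 2) * (Real.sqrt D.det)⁻¹ *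
        ∫ x : Fin d → ℝ, ‖WithLp.toLp 2 x‖ ^ (2 * n) *
            Real.exp (-(1 / 2) * ∑ i, x i * Matrix.mulVec D⁻¹ x i)) := by
    simp only [EuclideanSpace.norm_eq, Real.norm_eq_abs, sq_abs]
    ring
  rw [hlim]
  refine key.congr' ?_
  filter_upwards [hueq, hu.eventually_gt_atTop 0] with k hk hk0
  rw [hk]
  simp only [Function.comp]
  rw [← tsum_mul_left, ← tsum_div_const]
  congr 1
  ext x
  rw [auxX_norm, div_pow, pow_mul (Real.sqrt (u k)), Real.sq_sqrt hk0.le]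
  field_simp
end
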